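/- arXiv:2007.10199 — 2 statements merged into one kernel-verified Lean document; each statement's English description precedes it below -/
import Mathlib

section
/- Let F be a field of characteristic 0. The family of sequences in ℕ → F indexed by pairs (λ, i), where λ ranges over the nonzero elements of F and i over the natural numbers, given by (λ, i) ↦ (k ↦ (k:F)^i · λ^k), is linearly independent over F. -/
/-!
The sequence `k ↦ k ^ i * μ ^ k` is a generalized eigenvector of the shift operator
`(S u) k = u (k + 1)` for the eigenvalue `μ`: applying `S - μ` to it gives a combination of the
sequences `k ↦ k ^ j * μ ^ k` with `j < i` (`shift_sub_smul_polyGeom`), so induction on `i` applies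
(`polyGeom_mem_maxGenEigenspace`). Generalized eigenspaces for distinct eigenvalues are
independent, hence only a single `μ ≠ 0` needs to be considered. There, a vanishing combination
is a polynomial vanishing at all natural numbers, which are infinitely many elements of `F` in
characteristic zero (`linearIndependent_polyGeom`).
-/

namespace PolyGeom

/-- The shift operator `(S u) k = u (k + 1)` on sequences. -/
def shift (F : Type*) [Field F] : Module.End F (ℕ → F) :=
  LinearMap.funLeft F F (fun k : ℕ => k + 1)

/-- The sequence `k ↦ k ^ i * μ ^ k`. -/
def polyGeom {F : Type*} [Field F] (μ : F) (i : ℕ) : ℕ → F :=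
  fun k => (k : F) ^ i * μ ^ k

lemma shift_sub_smul_polyGeom {F : Type*} [Field F] (μ : F) (i : ℕ) :
    (shift F - μ • (1 : Module.End F (ℕ → F))) (polyGeom μ i) =
      ∑ j ∈ Finset.range i, (μ * (i.choose j : F)) • polyGeom μ j := by
  funext k
  have h : ((k : F) + 1) ^ i =
      ∑ j ∈ Finset.range i, (k : F) ^ j * (i.choose j : F) + (k : F) ^ i := by
    rw [add_pow, Finset.sum_range_succ]
    simp
  have h' : ∑ j ∈ Finset.range i, μ * (i.choose j : F) * ((k : F) ^ j * μ ^ k) =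
      (∑ j ∈ Finset.range i, (k : F) ^ j * (i.choose j : F)) * μ ^ (k + 1) := by
    rw [Finset.sum_mul]
    exact Finset.sum_congr rfl fun j _ => by ring
  simp only [LinearMap.sub_apply, LinearMap.smul_apply, Module.End.one_apply, Pi.sub_apply,
    Pi.smul_apply, smul_eq_mul, shift, LinearMap.funLeft_apply, polyGeom, Finset.sum_apply,
    Nat.cast_add, Nat.cast_one, h, h']
  ring

lemma polyGeom_mem_maxGenEigenspace {F : Type*} [Field F] (μ : F) (i : ℕ) :
    polyGeom μ i ∈ (shift F).maxGenEigenspace μ := by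
  induction i using Nat.strong_induction_on with
  | _ i ih =>
    have h : (shift F - μ • (1 : Module.End F (ℕ → F))) (polyGeom μ i) ∈
        (shift F).maxGenEigenspace μ := by
      rw [shift_sub_smul_polyGeom]
      exact Submodule.sum_mem _ fun j hj =>
        Submodule.smul_mem _ _ (ih j (Finset.mem_range.mp hj))
    rw [Module.End.mem_maxGenEigenspace] at h ⊢
    obtain ⟨n, hn⟩ := h
    exact ⟨n + 1, by rw [pow_succ, Module.End.mul_apply, hn]⟩

lemma linearIndependent_polyGeom {F : Type*} [Field F] [CharZero F] {μ : F} (hμ : μ ≠ 0) :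
    LinearIndependent F (polyGeom μ) := by
  let φ : Polynomial F →ₗ[F] (ℕ → F) :=
    LinearMap.pi fun k => μ ^ k • Polynomial.leval (k : F)
  have hφ : LinearMap.ker φ = ⊥ := by
    refine LinearMap.ker_eq_bot'.mpr fun p hp => p.eq_zero_of_infinite_isRoot ?_
    refine (Set.infinite_range_of_injective (Nat.cast_injective (R := F))).mono ?_
    rintro _ ⟨k, rfl⟩
    have := congrFun hp k
    simpa [φ, hμ] using this
  have h := (Polynomial.basisMonomials F).linearIndependent.map' φ hφ
  have e : φ ∘ Polynomial.basisMonomials F = polyGeom μ := by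
    funext i k
    simp [φ, polyGeom, mul_comm]
  exact e ▸ h

end PolyGeom

/-- In characteristic zero, the family of sequences `k ↦ (k:F)^i * λ^k`, indexed by pairs
`(λ, i)` with `λ` a nonzero element of `F` and `i : ℕ`, is linearly independent over `F`. -/
theorem linearIndependent_polynomial_geometric (F : Type*) [Field F] [CharZero F] :
    LinearIndependent F
      (fun p : {x : F // x ≠ 0} × ℕ => fun k : ℕ => (k : F) ^ p.2 * (p.1 : F) ^ k) := by
  have hsup := (PolyGeom.shift F).independent_maxGenEigenspace.comp
    (Subtype.val_injective (p := fun x : F => x ≠ 0))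
  have hmem (μ : {x : F // x ≠ 0}) : Submodule.span F (Set.range (PolyGeom.polyGeom (μ : F))) ≤
      (PolyGeom.shift F).maxGenEigenspace (μ : F) := by
    rw [Submodule.span_le]
    rintro _ ⟨i, rfl⟩
    exact PolyGeom.polyGeom_mem_maxGenEigenspace _ i
  have hind : iSupIndep fun μ : {x : F // x ≠ 0} =>
      Submodule.span F (Set.range (PolyGeom.polyGeom (μ : F))) :=
    hsup.mono hmem
  have h : LinearIndependent F
      fun q : Σ _ : {x : F // x ≠ 0}, ℕ => PolyGeom.polyGeom (q.1 : F) q.2 := by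
    refine linearIndependent_iUnion_finite
      (f := fun (μ : {x : F // x ≠ 0}) => PolyGeom.polyGeom (μ : F))
      (fun μ => PolyGeom.linearIndependent_polyGeom μ.2) ?_
    intro μ t _ hμ
    refine (hind μ).mono_right (iSup₂_mono' fun ν hν => ⟨ν, ?_, le_rfl⟩)
    rintro rfl
    exact hμ hν
  have h' := h.comp (Equiv.sigmaEquivProd {x : F // x ≠ 0} ℕ).symm (Equiv.injective _)
  exact h'
end

section
/- Let F be a field of characteristic 0, A an n×n matrix over F, p, s, τ natural numbers, λ_1,…,λ_p pairwise distinct nonzero elements of F, and M_{j,i} (1 ≤ j ≤ p, 0 ≤ i < s) n×n matrices over F. Suppose that for every k ≥ τ: A^k = ∑_{j=1}^{p} λ_j^k · ∑_{i=0}^{s−1} (k:F)^i · M_{j,i}. Then there exists an n×n matrix X over F such that A·X = X·A, X·A·X = X, A^{τ+1}·X = A^{τ}, and for every natural number k ≥ 1: X^k = ∑_{j=1}^{p} (λ_j⁻¹)^k · ∑_{i=0}^{s−1} (−1)^i·(k:F)^i · M_{j,i}. (That is, the powers of the Drazin inverse of A are obtained by plugging −k for k in the polynomial-coefficient geometric part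 of A.) -/
open Finset

/-!
Let `G z = ∑ j, lam j ^ z • ∑ i, z ^ i • M j i` for every integer `z`, so that `A ^ k = G k` for
`k ≥ τ`. The claim is that `G` is a (non-unital) one-parameter family, `G a * G b = G (a + b)`, with
`A * G z = G (z + 1) = G z * A`; then `X = G (-1)` satisfies everything at once.

These identities hold for large arguments because powers of `A` multiply correctly, and they extend
to all integers by rigidity: exponential polynomials on `ℤ` with nonzero bases satisfy a linear
recurrence whose constant coefficient is nonzero (`expPoly_mem_recurrent`), so they can be run
backwards, and two of them agreeing at all large integers are equal (`eq_of_eventually_eq`).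
-/

open Polynomial

/-- The forward shift `f ↦ f (· + 1)` on two-sided sequences. -/
def shiftEnd (F V : Type*) [Field F] [AddCommGroup V] [Module F V] : Module.End F (ℤ → V) :=
  LinearMap.funLeft F V (fun z : ℤ => z + 1)

section

variable {F V W : Type*} [Field F] [AddCommGroup V] [Module F V] [AddCommGroup W] [Module F W]

theorem shiftEnd_pow_apply (i : ℕ) (f : ℤ → V) (z : ℤ) :
    (shiftEnd F V ^ i) f z = f (z + i) := by
  induction i generalizing z with
  | zero => simp
  | succ i ih =>
    rw [pow_succ', Module.End.mul_apply]
    change ((shiftEnd F V ^ i) f) (z + 1) = _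
    rw [ih]
    congr 1
    push_cast
    ring

theorem aeval_shiftEnd_apply (q : F[X]) (f : ℤ → V) (z : ℤ) :
    aeval (shiftEnd F V) q f z = ∑ i ∈ range (q.natDegree + 1), q.coeff i • f (z + i) := by
  rw [aeval_eq_sum_range]
  simp [LinearMap.sum_apply, Finset.sum_apply, shiftEnd_pow_apply]

variable (F V) in
/-- The two-sided sequences satisfying a linear recurrence with constant coefficients, the lowest
of which is nonzero, so that the recurrence can be solved backwards. -/
def recurrent : Submodule F (ℤ → V) where
  carrier := {f | ∃ q : F[X], q.coeff 0 ≠ 0 ∧ aeval (shiftEnd F V) q f = 0}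
  zero_mem' := ⟨1, by simp, by simp⟩
  add_mem' := by
    rintro f g ⟨q, hq, hf⟩ ⟨r, hr, hg⟩
    refine ⟨q * r, by simp [mul_coeff_zero, hq, hr], ?_⟩
    rw [map_add]
    nth_rw 1 [mul_comm q r]
    simp [map_mul, Module.End.mul_apply, hf, hg]
  smul_mem' := by
    rintro c f ⟨q, hq, hf⟩
    exact ⟨q, hq, by rw [map_smul, hf, smul_zero]⟩

theorem recurrent_map (L : V →ₗ[F] W) {f : ℤ → V} (hf : f ∈ recurrent F V) :
    (fun z => L (f z)) ∈ recurrent F W := by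
  obtain ⟨q, hq, h⟩ := hf
  refine ⟨q, hq, ?_⟩
  funext z
  have hz := congrArg L (congrFun h z)
  rw [aeval_shiftEnd_apply] at hz ⊢
  simpa using hz

theorem recurrent_translate (b : ℤ) {f : ℤ → V} (hf : f ∈ recurrent F V) :
    (fun z => f (z + b)) ∈ recurrent F V := by
  obtain ⟨q, hq, h⟩ := hf
  refine ⟨q, hq, ?_⟩
  funext z
  have hz := congrFun h (z + b)
  rw [aeval_shiftEnd_apply] at hz ⊢
  simpa [add_right_comm] using hz

theorem recurrent_of_sub {f : ℤ → V} {c : F} (hc : c ≠ 0)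
    (hf : (fun z => f (z + 1) - c • f z) ∈ recurrent F V) : f ∈ recurrent F V := by
  obtain ⟨q, hq, h⟩ := hf
  refine ⟨q * (X - C c), by simp [mul_coeff_zero, hq, hc], ?_⟩
  have e : aeval (shiftEnd F V) (X - C c) f = fun z => f (z + 1) - c • f z := by
    funext z
    simp [shiftEnd, LinearMap.funLeft_apply]
  rw [map_mul, Module.End.mul_apply, e, h]

/-- The operator `f ↦ f (· + 1) - c • f` lowers the degree of the polynomial factor, whence the
strong induction on `i`. -/
theorem monomial_mem_recurrent {c : F} (hc : c ≠ 0) (i : ℕ) (v : V) :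
    (fun z : ℤ => c ^ z • (z : F) ^ i • v) ∈ recurrent F V := by
  induction i using Nat.strong_induction_on with
  | _ i ih =>
    apply recurrent_of_sub hc
    have e : (fun z : ℤ => c ^ (z + 1) • ((z + 1 : ℤ) : F) ^ i • v - c • c ^ z • (z : F) ^ i • v)
        = ∑ m ∈ range i, (c * (i.choose m : F)) • fun z : ℤ => c ^ z • (z : F) ^ m • v := by
      funext z
      simp only [Finset.sum_apply, Pi.smul_apply, smul_smul, ← Finset.sum_smul, ← sub_smul]
      congr 1
      push_cast
      rw [add_pow, Finset.sum_range_succ, zpow_add_one₀ hc]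
      simp only [Nat.choose_self, one_pow, Nat.cast_one, mul_one]
      rw [mul_add, mul_comm c (c ^ z * _), mul_right_comm (c ^ z) _ c, add_sub_cancel_right,
        Finset.mul_sum]
      exact Finset.sum_congr rfl fun m _ => by ring
    rw [e]
    exact Submodule.sum_mem _ fun m hm =>
      Submodule.smul_mem _ _ (ih m (Finset.mem_range.1 hm))

theorem expPoly_mem_recurrent {p s : ℕ} (lam : Fin p → F) (hlam : ∀ j, lam j ≠ 0)
    (M : Fin p → ℕ → V) :
    (fun z : ℤ => ∑ j, lam j ^ z • ∑ i ∈ range s, (z : F) ^ i • M j i) ∈ recurrent F V := by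
  have e : (fun z : ℤ => ∑ j, lam j ^ z • ∑ i ∈ range s, (z : F) ^ i • M j i)
      = ∑ j, ∑ i ∈ range s, fun z : ℤ => lam j ^ z • (z : F) ^ i • M j i := by
    funext z
    simp [Finset.sum_apply, Finset.smul_sum]
  rw [e]
  exact Submodule.sum_mem _ fun j _ => Submodule.sum_mem _ fun i _ =>
    monomial_mem_recurrent (hlam j) i (M j i)

/-- Solving the recurrence for its lowest term propagates vanishing from the right to the left. -/
theorem eq_zero_of_eventually_zero {f : ℤ → V} (hf : f ∈ recurrent F V) (N : ℤ)
    (hN : ∀ z, N ≤ z → f z = 0) (z : ℤ) : f z = 0 := by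
  obtain ⟨q, hq, h⟩ := hf
  have key : ∀ d : ℕ, ∀ z, N - d ≤ z → f z = 0 := by
    intro d
    induction d with
    | zero => simpa using hN
    | succ d ih =>
      intro z hz
      have hz0 := congrFun h z
      rw [aeval_shiftEnd_apply, Finset.sum_range_succ', Finset.sum_eq_zero] at hz0
      · simpa [hq] using hz0
      · intro i _
        rw [ih _ (by push_cast at hz ⊢; omega), smul_zero]
  exact key (N - z).toNat z (by omega)

theorem eq_of_eventually_eq {f g : ℤ → V} (hf : f ∈ recurrent F V) (hg : g ∈ recurrent F V)
    (N : ℤ) (hN : ∀ z, N ≤ z → f z = g z) (z : ℤ) : f z = g z :=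
  sub_eq_zero.1 <| eq_zero_of_eventually_zero (Submodule.sub_mem _ hf hg) N
    (fun w hw => sub_eq_zero.2 (hN w hw)) z

end

/-- In characteristic zero: if `A^k = ∑_j λ_j^k ∑_i (k:F)^i M_{j,i}` for all `k ≥ τ`, then
there is a matrix `X` (the Drazin inverse of `A`) commuting with `A`, satisfying `X A X = X`
and `A^{τ+1} X = A^τ`, whose powers are obtained by plugging `-k` for `k` in the geometric
part of `A`: `X^k = ∑_j λ_j^{-k} ∑_i (-1)^i (k:F)^i M_{j,i}` for all `k ≥ 1`. -/
theorem drazin_inverse_by_substitution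
    (F : Type*) [Field F] [CharZero F]
    (n : Type*) [Fintype n] [DecidableEq n] [Nonempty n]
    (A : Matrix n n F) (p s τ : ℕ)
    (lam : Fin p → F) (hlam : ∀ j, lam j ≠ 0) (hinj : Function.Injective lam)
    (M : Fin p → ℕ → Matrix n n F)
    (hagree : ∀ k : ℕ, τ ≤ k →
      A ^ k = ∑ j : Fin p, lam j ^ k •
        ∑ i ∈ Finset.range s, (k : F) ^ i • M j i) :
    ∃ X : Matrix n n F,
      A * X = X * A ∧ X * A * X = X ∧ A ^ (τ + 1) * X = A ^ τ ∧
      ∀ k : ℕ, 1 ≤ k →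
        X ^ k = ∑ j : Fin p, (lam j)⁻¹ ^ k •
          ∑ i ∈ Finset.range s, ((-1 : F) ^ i * (k : F) ^ i) • M j i := by
  let G : ℤ → Matrix n n F := fun z => ∑ j, lam j ^ z • ∑ i ∈ range s, (z : F) ^ i • M j i
  have hG : G ∈ recurrent F (Matrix n n F) := expPoly_mem_recurrent lam hlam M
  have hAG (k : ℕ) (hk : τ ≤ k) : A ^ k = G k := by
    rw [hagree k hk]
    simp [G]
  have hleft (z : ℤ) : A * G z = G (z + 1) := by
    refine eq_of_eventually_eq (recurrent_map (LinearMap.mulLeft F A) hG)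
      (recurrent_translate 1 hG) τ (fun w hw => ?_) z
    lift w to ℕ using by omega
    have hw' : τ ≤ w := by omega
    have h := hAG (w + 1) (by omega)
    push_cast at h
    simp only [LinearMap.mulLeft_apply]
    rw [← h, ← hAG w hw', pow_succ']
  have hright (z : ℤ) : G z * A = G (z + 1) := by
    refine eq_of_eventually_eq (recurrent_map (LinearMap.mulRight F A) hG)
      (recurrent_translate 1 hG) τ (fun w hw => ?_) z
    lift w to ℕ using by omega
    have hw' : τ ≤ w := by omega
    have h := hAG (w + 1) (by omega)
    push_cast at h
    simp only [LinearMap.mulRight_apply]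
    rw [← h, ← hAG w hw', pow_succ]
  have hpow (k : ℕ) (b : ℤ) : A ^ k * G b = G (k + b) := by
    induction k with
    | zero => simp
    | succ k ih =>
      rw [pow_succ', mul_assoc, ih, hleft]
      congr 1
      push_cast
      ring
  have hmul (a b : ℤ) : G a * G b = G (a + b) := by
    refine eq_of_eventually_eq (recurrent_map (LinearMap.mulRight F (G b)) hG)
      (recurrent_translate b hG) τ (fun w hw => ?_) a
    lift w to ℕ using by omega
    simp only [LinearMap.mulRight_apply]
    rw [← hAG w (by omega), hpow]
  refine ⟨G (-1), by rw [hleft, hright], by rw [hright, hmul]; rfl, ?_, fun k hk => ?_⟩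
  · rw [hpow, hAG τ le_rfl]
    congr 1
    push_cast
    ring
  · have hX : G (-1) ^ k = G (-k) := by
      induction k, hk using Nat.le_induction with
      | base => simp
      | succ k _ ih =>
        rw [pow_succ, ih, hmul]
        congr 1
        push_cast
        ring
    rw [hX]
    simp only [G, Int.cast_neg, Int.cast_natCast, zpow_neg, zpow_natCast, inv_pow]
    refine Finset.sum_congr rfl fun j _ => ?_
    congr 1
    refine Finset.sum_congr rfl fun i _ => ?_
    rw [neg_pow]
end
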